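/- Let k ≥ 1 and n ≥ 2 be integers with n odd. Let Γ be the group with presentation ⟨x, y | x·y·x⁻¹ = y⁻¹, x^(2^k) = y^n⟩, i.e., the quotient of the free group on two generators x, y by the normal closure of the relators x·y·x⁻¹·y and x^(2^k)·y^(−n). Then the abelianization of Γ is isomorphic to ℤ/2^(k+1). -/

import Mathlib

/-!
In a commutative group the first relator says `y ^ 2 = 1`. Hence `y ^ n = y` for odd `n`, and the
second relator says `y = x ^ m`. The abelianization is therefore generated by the class of `x`,
subject only to `x ^ (2 * m) = 1`.
-/

/-- The relators of the presentation `⟨x, y | x y x⁻¹ = y⁻¹, x ^ m = y ^ n⟩`; the letters `0` and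
`1` stand for `x` and `y`. -/
def prismRelators (m : ℕ) (n : ℤ) : Set (FreeGroup (Fin 2)) :=
  {FreeGroup.of 0 * FreeGroup.of 1 * (FreeGroup.of 0)⁻¹ * FreeGroup.of 1,
    (FreeGroup.of 0) ^ m * (FreeGroup.of 1) ^ (-n)}

/-- The group `⟨x, y | x y x⁻¹ = y⁻¹, x ^ m = y ^ n⟩`, a form taken by the fundamental groups of
prism manifolds. -/
abbrev PrismGroup (m : ℕ) (n : ℤ) : Type :=
  PresentedGroup (prismRelators m n)

theorem zpow_eq_self_of_odd {G : Type*} [Group G] {y : G} {n : ℤ} (hn : Odd n) (hy : y ^ 2 = 1) :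
    y ^ n = y := by
  obtain ⟨j, rfl⟩ := hn
  rw [zpow_add_one, zpow_mul, zpow_ofNat, hy, one_zpow, one_mul]

theorem forall_prismRelators_map_eq_one_iff {A : Type*} [CommGroup A] {m : ℕ} {n : ℤ} (hn : Odd n)
    (φ : FreeGroup (Fin 2) →* A) :
    (∀ r ∈ prismRelators m n, φ r = 1) ↔
      φ (FreeGroup.of 1) = φ (FreeGroup.of 0) ^ m ∧ φ (FreeGroup.of 0) ^ (2 * m) = 1 := by
  simp only [prismRelators, Set.forall_mem_insert, Set.mem_singleton_iff, forall_eq, map_mul,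
    map_inv, map_pow, map_zpow, mul_inv_cancel_comm, ← sq, zpow_neg, mul_inv_eq_one, pow_mul']
  constructor
  · rintro ⟨hy, hxy⟩
    rw [zpow_eq_self_of_odd hn hy] at hxy
    exact ⟨hxy.symm, hxy ▸ hy⟩
  · rintro ⟨hyx, hx⟩
    rw [hyx]
    exact ⟨hx, (zpow_eq_self_of_odd hn hx).symm⟩

theorem abelianization_presentedGroup_generated_by {α : Type*} {rels : Set (FreeGroup α)}
    (H : Subgroup (Abelianization (PresentedGroup rels)))
    (hH : ∀ a, Abelianization.of (PresentedGroup.of a) ∈ H)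
    (g : Abelianization (PresentedGroup rels)) : g ∈ H := by
  obtain ⟨g, rfl⟩ := QuotientGroup.mk_surjective g
  exact PresentedGroup.generated_by rels (H.comap Abelianization.of) hH g

namespace PrismGroup

variable {m : ℕ} {n : ℤ}

/-- The class of the generator `x` in the abelianization of `⟨x, y | x y x⁻¹ = y⁻¹, x ^ m = y ^ n⟩`;
for odd `n` it generates the abelianization. -/
def abelianizedGen (m : ℕ) (n : ℤ) : Abelianization (PrismGroup m n) :=
  Abelianization.of (PresentedGroup.of 0)

theorem abelianization_relations (hn : Odd n) :
    Abelianization.of (PresentedGroup.of 1) = abelianizedGen m n ^ m ∧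
      abelianizedGen m n ^ (2 * m) = 1 :=
  (forall_prismRelators_map_eq_one_iff hn
    (Abelianization.of.comp (PresentedGroup.mk (prismRelators m n)))).mp fun r hr => by
      rw [MonoidHom.comp_apply, PresentedGroup.one_of_mem hr, map_one]

theorem mem_zpowers_abelianizedGen (hn : Odd n) (g : Abelianization (PrismGroup m n)) :
    g ∈ Subgroup.zpowers (abelianizedGen m n) := by
  refine abelianization_presentedGroup_generated_by _ (Fin.forall_fin_two.mpr ⟨?_, ?_⟩) g
  · exact Subgroup.mem_zpowers _
  · rw [(abelianization_relations hn).1]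
    exact Subgroup.npow_mem_zpowers _ m

theorem exists_abelianization_hom {A : Type*} [CommGroup A] (hn : Odd n) {a : A}
    (ha : a ^ (2 * m) = 1) :
    ∃ f : Abelianization (PrismGroup m n) →* A, f (abelianizedGen m n) = a := by
  have hrel : ∀ r ∈ prismRelators m n, FreeGroup.lift ![a, a ^ m] r = 1 :=
    (forall_prismRelators_map_eq_one_iff hn _).mpr (by simpa using ha)
  refine ⟨Abelianization.lift (PresentedGroup.toGroup hrel), ?_⟩
  rw [abelianizedGen, Abelianization.lift_apply_of, PresentedGroup.toGroup.of, Matrix.cons_val_zero]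

theorem orderOf_abelianizedGen (hn : Odd n) : orderOf (abelianizedGen m n) = 2 * m := by
  have hone : orderOf (Multiplicative.ofAdd (1 : ZMod (2 * m))) = 2 * m := by
    rw [orderOf_ofAdd_eq_addOrderOf, ZMod.addOrderOf_one]
  obtain ⟨f, hf⟩ := exists_abelianization_hom (n := n) hn (orderOf_dvd_iff_pow_eq_one.mp hone.dvd)
  refine Nat.dvd_antisymm (orderOf_dvd_of_pow_eq_one (abelianization_relations hn).2) ?_
  calc 2 * m = orderOf (f (abelianizedGen m n)) := by rw [hf, hone]
    _ ∣ orderOf (abelianizedGen m n) := orderOf_map_dvd f _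

end PrismGroup

theorem prism_abelianization_odd_general (m : ℕ) {n : ℤ} (hn : Odd n) :
    Nonempty (Abelianization (PrismGroup m n) ≃* Multiplicative (ZMod (2 * m))) := by
  have hcyclic : IsCyclic (Abelianization (PrismGroup m n)) :=
    ⟨PrismGroup.abelianizedGen m n, PrismGroup.mem_zpowers_abelianizedGen hn⟩
  have hcard : Nat.card (Abelianization (PrismGroup m n)) = 2 * m := by
    rw [← orderOf_eq_card_of_forall_mem_zpowers (PrismGroup.mem_zpowers_abelianizedGen hn),
      PrismGroup.orderOf_abelianizedGen hn]
  rw [← hcard]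
  exact ⟨(zmodCyclicMulEquiv hcyclic).symm⟩

/-- For `k ≥ 1` and odd `n ≥ 2`, the abelianization of the group
`⟨x, y | x y x⁻¹ = y⁻¹, x^(2^k) = y^n⟩` is isomorphic to `ℤ/2^(k+1)`. -/
theorem prism_abelianization_odd (k n : ℕ) (hk : 1 ≤ k) (hn : 2 ≤ n) (hno : Odd n) :
    Nonempty
      (Abelianization (PresentedGroup
        ({FreeGroup.of 0 * FreeGroup.of 1 * (FreeGroup.of 0)⁻¹ * FreeGroup.of 1,
          (FreeGroup.of 0) ^ (2 ^ k) * (FreeGroup.of 1) ^ (-(n : ℤ))} :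
          Set (FreeGroup (Fin 2)))) ≃*
        Multiplicative (ZMod (2 ^ (k + 1)))) := by
  rw [pow_succ']
  exact prism_abelianization_odd_general (2 ^ k) (mod_cast hno)
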